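/- Let f, g : ℝ³ → ℝ be smooth bounded functions and set h := Xg - Yf. If h ∘ φ_s = h and h ∘ ψ_u = h for all s, u ∈ ℝ, then h = 0 identically. -/

import Mathlib

/-- The flow `φ_s(x,y,t) = (x + s·λᵗ, y + a·s·λᵗ, t)` of `X = λᵗ(∂/∂x + a ∂/∂y)`. -/
noncomputable def phi (lam a : ℝ) (s : ℝ) (p : ℝ × ℝ × ℝ) : ℝ × ℝ × ℝ :=
  (p.1 + s * lam ^ p.2.2, p.2.1 + a * s * lam ^ p.2.2, p.2.2)

/-- The flow `ψ_u(x,y,t) = (x + u·λ⁻ᵗ, y + b·u·λ⁻ᵗ, t)` of `Y = λ⁻ᵗ(∂/∂x + b ∂/∂y)`. -/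
noncomputable def psi (lam b : ℝ) (u : ℝ) (p : ℝ × ℝ × ℝ) : ℝ × ℝ × ℝ :=
  (p.1 + u * lam ^ (-p.2.2), p.2.1 + b * u * lam ^ (-p.2.2), p.2.2)

/-- The vector field `X = λᵗ(∂/∂x + a ∂/∂y)` acting on functions. -/
noncomputable def Xop (lam a : ℝ) (f : ℝ × ℝ × ℝ → ℝ) (p : ℝ × ℝ × ℝ) : ℝ :=
  lam ^ p.2.2 * (deriv (fun x => f (x, p.2.1, p.2.2)) p.1
    + a * deriv (fun y => f (p.1, y, p.2.2)) p.2.1)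

/-- The vector field `Y = λ⁻ᵗ(∂/∂x + b ∂/∂y)` acting on functions. -/
noncomputable def Yop (lam b : ℝ) (f : ℝ × ℝ × ℝ → ℝ) (p : ℝ × ℝ × ℝ) : ℝ :=
  lam ^ (-p.2.2) * (deriv (fun x => f (x, p.2.1, p.2.2)) p.1
    + b * deriv (fun y => f (p.1, y, p.2.2)) p.2.1)

/-!
Since `X` and `Y` are constant on each plane `t = const`, their flows act there by translations.
In the flow coordinates `(s, u) ↦ ψ_u (φ_s p)` the fields `X` and `Y` become `∂/∂s` and `∂/∂u`, and
the invariant function `h = Xg - Yf` becomes a constant `c`. By the divergence theorem, the integral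
of `c` over the square with side `s` is a boundary integral of `f` and `g`, so
`s² |c| ≤ 2 |s| (sup |f| + sup |g|)`. Dividing by `s²` and letting `s → ∞` forces `c = 0`.
-/

open MeasureTheory Filter

section Square

variable {E : Type*} [NormedAddCommGroup E] [NormedSpace ℝ E] [CompleteSpace E]
  {F G : ℝ × ℝ → E} {c : E}

theorem sq_smul_eq_boundary_integral_of_fderiv_sub_fderiv_eq (hF : Differentiable ℝ F)
    (hG : Differentiable ℝ G)
    (hc : ∀ q, fderiv ℝ G q (1, 0) - fderiv ℝ F q (0, 1) = c) (s : ℝ) :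
    s ^ 2 • c = ((∫ y in 0..s, G (s, y)) - ∫ y in 0..s, G (0, y)) -
      ((∫ x in 0..s, F (x, s)) - ∫ x in 0..s, F (x, 0)) := by
  have hdiv (q : ℝ × ℝ) : fderiv ℝ G q (1, 0) + (-fderiv ℝ F q) (0, 1) = c := by
    rw [neg_apply, ← sub_eq_add_neg, hc]
  have hint : IntegrableOn (fun q ↦ fderiv ℝ G q (1, 0) + (-fderiv ℝ F q) (0, 1))
      (Set.uIcc 0 s ×ˢ Set.uIcc 0 s) := by
    simp only [hdiv]
    exact continuousOn_const.integrableOn_compact (isCompact_uIcc.prod isCompact_uIcc)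
  have hgreen := integral2_divergence_prod_of_hasFDerivAt G (-F) (fderiv ℝ G)
    (fun q ↦ -fderiv ℝ F q) 0 0 s s hG.continuous.continuousOn hF.continuous.neg.continuousOn
    (fun q _ ↦ (hG q).hasFDerivAt) (fun q _ ↦ (hF q).hasFDerivAt.neg) hint
  simp only [hdiv, intervalIntegral.integral_const, intervalIntegral.integral_neg, sub_zero,
    smul_smul, ← sq, Pi.neg_apply] at hgreen
  rw [hgreen]
  abel

theorem sq_mul_norm_le_of_fderiv_sub_fderiv_eq {C D : ℝ} (hF : Differentiable ℝ F)
    (hG : Differentiable ℝ G) (hFC : ∀ q, ‖F q‖ ≤ C) (hGD : ∀ q, ‖G q‖ ≤ D)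
    (hc : ∀ q, fderiv ℝ G q (1, 0) - fderiv ℝ F q (0, 1) = c) (s : ℝ) :
    s ^ 2 * ‖c‖ ≤ 2 * |s| * (C + D) := by
  have hedge {k : ℝ → E} {M : ℝ} (hk : ∀ x, ‖k x‖ ≤ M) : ‖∫ x in 0..s, k x‖ ≤ M * |s| := by
    simpa only [sub_zero] using
      intervalIntegral.norm_integral_le_of_norm_le_const (a := 0) (b := s) fun x _ ↦ hk x
  calc s ^ 2 * ‖c‖ = ‖s ^ 2 • c‖ := by rw [norm_smul, Real.norm_of_nonneg (sq_nonneg s)]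
    _ ≤ (‖∫ y in 0..s, G (s, y)‖ + ‖∫ y in 0..s, G (0, y)‖) +
        (‖∫ x in 0..s, F (x, s)‖ + ‖∫ x in 0..s, F (x, 0)‖) := by
      rw [sq_smul_eq_boundary_integral_of_fderiv_sub_fderiv_eq hF hG hc]
      exact norm_sub_le_of_le (norm_sub_le _ _) (norm_sub_le _ _)
    _ ≤ (D * |s| + D * |s|) + (C * |s| + C * |s|) :=
      add_le_add (add_le_add (hedge fun y ↦ hGD (s, y)) (hedge fun y ↦ hGD (0, y)))
        (add_le_add (hedge fun x ↦ hFC (x, s)) (hedge fun x ↦ hFC (x, 0)))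
    _ = 2 * |s| * (C + D) := by ring

end Square

theorem nonpos_of_forall_sq_mul_le {x M : ℝ} (hx : ∀ s : ℝ, s ^ 2 * x ≤ |s| * M) : x ≤ 0 := by
  have hdecay : Tendsto (fun s : ℝ ↦ M / s) atTop (nhds 0) := tendsto_id.const_div_atTop M
  refine ge_of_tendsto hdecay ((eventually_gt_atTop 0).mono fun s hs ↦ ?_)
  rw [le_div_iff₀ hs]
  refine le_of_mul_le_mul_left ?_ hs
  calc s * (x * s) = s ^ 2 * x := by ring
    _ ≤ |s| * M := hx s
    _ = s * M := by rw [abs_of_pos hs]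

section Plane

variable {V E : Type*} [NormedAddCommGroup V] [NormedSpace ℝ V]
  [NormedAddCommGroup E] [NormedSpace ℝ E] {f g : V → E}

theorem fderiv_comp_const_add_clm {U : Type*} [NormedAddCommGroup U] [NormedSpace ℝ U]
    {p : V} {L : U →L[ℝ] V} {q : U} (hf : DifferentiableAt ℝ f (p + L q)) :
    fderiv ℝ (fun q ↦ f (p + L q)) q = (fderiv ℝ f (p + L q)).comp L :=
  (hf.hasFDerivAt.comp q (L.hasFDerivAt.const_add p)).fderiv

theorem eq_zero_of_fderiv_sub_fderiv_eq_on_plane [CompleteSpace E] {p v w : V} {c : E}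
    (hf : Differentiable ℝ f) (hg : Differentiable ℝ g)
    (hfb : ∃ C : ℝ, ∀ q, ‖f q‖ ≤ C) (hgb : ∃ C : ℝ, ∀ q, ‖g q‖ ≤ C)
    (hc : ∀ s u : ℝ, fderiv ℝ g (p + s • v + u • w) v - fderiv ℝ f (p + s • v + u • w) w = c) :
    c = 0 := by
  obtain ⟨C, hfC⟩ := hfb
  obtain ⟨D, hgD⟩ := hgb
  let L : ℝ × ℝ →L[ℝ] V := (ContinuousLinearMap.toSpanSingleton ℝ v).coprod
    (ContinuousLinearMap.toSpanSingleton ℝ w)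
  have hcoord (q : ℝ × ℝ) : fderiv ℝ (fun q ↦ g (p + L q)) q (1, 0) -
      fderiv ℝ (fun q ↦ f (p + L q)) q (0, 1) = c := by
    rw [fderiv_comp_const_add_clm (hg _), fderiv_comp_const_add_clm (hf _)]
    simpa [L, add_assoc] using hc q.1 q.2
  have hgrowth (s : ℝ) : s ^ 2 * ‖c‖ ≤ |s| * (2 * (C + D)) :=
    (sq_mul_norm_le_of_fderiv_sub_fderiv_eq (by fun_prop) (by fun_prop) (fun q ↦ hfC (p + L q))
      (fun q ↦ hgD (p + L q)) hcoord s).trans_eq (by ring)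
  exact norm_le_zero_iff.1 (nonpos_of_forall_sq_mul_le hgrowth)

end Plane

theorem fderiv_apply_horizontal {f : ℝ × ℝ × ℝ → ℝ} {p : ℝ × ℝ × ℝ} (hf : DifferentiableAt ℝ f p)
    (m k : ℝ) :
    fderiv ℝ f p (m • (1, k, 0)) = m * (deriv (fun x ↦ f (x, p.2.1, p.2.2)) p.1
      + k * deriv (fun y ↦ f (p.1, y, p.2.2)) p.2.1) := by
  have hx : HasDerivAt (fun x ↦ f (x, p.2.1, p.2.2)) (fderiv ℝ f p (1, 0, 0)) p.1 :=
    hf.hasFDerivAt.comp_hasDerivAt (f := fun x : ℝ ↦ (x, p.2.1, p.2.2)) p.1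
      ((hasDerivAt_id p.1).prodMk (hasDerivAt_const _ _))
  have hy : HasDerivAt (fun y ↦ f (p.1, y, p.2.2)) (fderiv ℝ f p (0, 1, 0)) p.2.1 :=
    hf.hasFDerivAt.comp_hasDerivAt (f := fun y : ℝ ↦ (p.1, y, p.2.2)) p.2.1
      ((hasDerivAt_const _ _).prodMk ((hasDerivAt_id p.2.1).prodMk (hasDerivAt_const _ _)))
  have hdecomp : ((1, k, 0) : ℝ × ℝ × ℝ) = (1, 0, 0) + k • (0, 1, 0) := by simp
  rw [hx.deriv, hy.deriv, hdecomp, map_smul, map_add, map_smul, smul_eq_mul, smul_eq_mul]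

theorem Xop_eq_fderiv (lam a : ℝ) {f : ℝ × ℝ × ℝ → ℝ} {p : ℝ × ℝ × ℝ}
    (hf : DifferentiableAt ℝ f p) : Xop lam a f p = fderiv ℝ f p (lam ^ p.2.2 • (1, a, 0)) :=
  (fderiv_apply_horizontal hf _ a).symm

theorem Yop_eq_fderiv (lam b : ℝ) {f : ℝ × ℝ × ℝ → ℝ} {p : ℝ × ℝ × ℝ}
    (hf : DifferentiableAt ℝ f p) : Yop lam b f p = fderiv ℝ f p (lam ^ (-p.2.2) • (1, b, 0)) :=
  (fderiv_apply_horizontal hf _ b).symm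

theorem psi_phi_eq_add_smul (lam a b s u : ℝ) (p : ℝ × ℝ × ℝ) :
    psi lam b u (phi lam a s p) =
      p + s • lam ^ p.2.2 • (1, a, 0) + u • lam ^ (-p.2.2) • (1, b, 0) := by
  obtain ⟨x, y, t⟩ := p
  simp only [phi, psi, Prod.smul_mk, smul_eq_mul, Prod.mk_add_mk, Prod.mk.injEq]
  exact ⟨by ring, by ring, by ring⟩

theorem stmt14_general (lam a b : ℝ) (f g : ℝ × ℝ × ℝ → ℝ)
    (hf : Differentiable ℝ f) (hg : Differentiable ℝ g)
    (hfb : ∃ C : ℝ, ∀ p : ℝ × ℝ × ℝ, |f p| ≤ C)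
    (hgb : ∃ C : ℝ, ∀ p : ℝ × ℝ × ℝ, |g p| ≤ C)
    (h : ℝ × ℝ × ℝ → ℝ)
    (hdef : h = fun p ↦ Xop lam a g p - Yop lam b f p)
    (hphi : ∀ s : ℝ, h ∘ phi lam a s = h)
    (hpsi : ∀ u : ℝ, h ∘ psi lam b u = h) :
    ∀ p : ℝ × ℝ × ℝ, h p = 0 := by
  intro p
  have hfderiv (q : ℝ × ℝ × ℝ) : h q = fderiv ℝ g q (lam ^ q.2.2 • (1, a, 0)) -
      fderiv ℝ f q (lam ^ (-q.2.2) • (1, b, 0)) := by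
    simp only [hdef, Xop_eq_fderiv lam a (hg q), Yop_eq_fderiv lam b (hf q)]
  refine eq_zero_of_fderiv_sub_fderiv_eq_on_plane (p := p) (v := lam ^ p.2.2 • (1, a, 0))
    (w := lam ^ (-p.2.2) • (1, b, 0)) hf hg hfb hgb fun s u ↦ ?_
  have hinv : h (psi lam b u (phi lam a s p)) = h p :=
    (congrFun (hpsi u) _).trans (congrFun (hphi s) p)
  rw [← psi_phi_eq_add_smul]
  exact (hfderiv _).symm.trans hinv

/-- Let `f, g : ℝ³ → ℝ` be smooth bounded functions and set
`h := Xg - Yf`. If `h ∘ φ_s = h` and `h ∘ ψ_u = h` for all `s, u ∈ ℝ`,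
then `h = 0` identically. -/
theorem stmt14 (lam a b : ℝ) (hlam : 1 < lam)
    (f g : ℝ × ℝ × ℝ → ℝ) (hf : ContDiff ℝ (⊤ : ℕ∞) f) (hg : ContDiff ℝ (⊤ : ℕ∞) g)
    (hfb : ∃ C : ℝ, ∀ p : ℝ × ℝ × ℝ, |f p| ≤ C)
    (hgb : ∃ C : ℝ, ∀ p : ℝ × ℝ × ℝ, |g p| ≤ C)
    (h : ℝ × ℝ × ℝ → ℝ)
    (hdef : h = fun p => Xop lam a g p - Yop lam b f p)
    (hphi : ∀ s : ℝ, h ∘ phi lam a s = h)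
    (hpsi : ∀ u : ℝ, h ∘ psi lam b u = h) :
    ∀ p : ℝ × ℝ × ℝ, h p = 0 :=
  stmt14_general lam a b f g (hf.differentiable (by simp)) (hg.differentiable (by simp))
    hfb hgb h hdef hphi hpsi
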